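/- Let k, l ≥ 0 with k + l ≥ 1, and consider the clause C(y_1, …, y_k, z_1, …, z_l) = y_1 ∨ ⋯ ∨ y_k ∨ ¬z_1 ∨ ⋯ ∨ ¬z_l in Boolean variables. Let f be the tropical polynomial in the k + l variables (y_1, …, y_k, z_1, …, z_l) given as the tropical product (⊙_{i=1}^k (0·y_i ⊕ 1)) ⊙ (0·z_1 ⊕ ⋯ ⊕ 0·z_l ⊕ 0). Then for every Boolean assignment (a_1, …, a_k, b_1, …, b_l) ∈ {True, False}^{k+l}, the clause evaluates to True if and only if the point (s(a_1), …, s(a_k), s(b_1), …, s(b_l)) ∈ ℝ^{k+l} lies in T(f), where s(True) = 1 and s(False) = 0. -/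

import Mathlib

open Finset Pointwise

/-- The affine-linear function given by a tropical term with coefficient `c`
and exponent vector `α`. -/
def tropTerm {n : ℕ} (c : ℝ) (α : Fin n → ℕ) (x : Fin n → ℝ) : ℝ :=
  c + ∑ j, (α j : ℝ) * x j

/-- The tropical hypersurface of the tropical polynomial with support `A`
and coefficients `c`: the set of points where the minimum of the terms is
attained at least twice. -/
def tropHyp {n : ℕ} (A : Finset (Fin n → ℕ)) (c : (Fin n → ℕ) → ℝ) :
    Set (Fin n → ℝ) :=
  {x | ∃ α ∈ A, ∃ β ∈ A, α ≠ β ∧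
    tropTerm (c α) α x = tropTerm (c β) β x ∧
    ∀ γ ∈ A, tropTerm (c α) α x ≤ tropTerm (c γ) γ x}

/-- A tropical polynomial: a (finite) support of exponent vectors, and coefficients. -/
structure TropPoly (n : ℕ) where
  supp : Finset (Fin n → ℕ)
  coeff : (Fin n → ℕ) → ℝ

def TropPoly.hyp {n : ℕ} (f : TropPoly n) : Set (Fin n → ℝ) :=
  tropHyp f.supp f.coeff

/-- Tropical product of two tropical polynomials. -/
noncomputable def TropPoly.mul {n : ℕ} (f g : TropPoly n) : TropPoly n where
  supp := f.supp + g.supp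
  coeff := fun γ =>
    sInf {r | ∃ α ∈ f.supp, ∃ β ∈ g.supp, α + β = γ ∧ r = f.coeff α + g.coeff β}

/-- The tropical multiplicative unit (the constant polynomial `0`). -/
def TropPoly.one (n : ℕ) : TropPoly n := ⟨{0}, fun _ => 0⟩

/-- Tropical product of a list of tropical polynomials. -/
noncomputable def TropPoly.listProd {n : ℕ} (l : List (TropPoly n)) : TropPoly n :=
  l.foldr TropPoly.mul (TropPoly.one n)

/-- The exponent vector `k · e_i`. -/
def single {n : ℕ} (i : Fin n) (k : ℕ) : Fin n → ℕ :=
  fun j => if j = i then k else 0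

/-- The Boolean-to-real encoding `s(True) = 1`, `s(False) = 0`. -/
def boolToReal (b : Bool) : ℝ := if b then 1 else 0

lemma mul_coeff_le {n : ℕ} (f g : TropPoly n) {α β : Fin n → ℕ}
    (hα : α ∈ f.supp) (hβ : β ∈ g.supp) :
    (f.mul g).coeff (α + β) ≤ f.coeff α + g.coeff β := by
  apply csInf_le
  · refine ((((f.supp ×ˢ g.supp).image
      (fun p => f.coeff p.1 + g.coeff p.2)).finite_toSet).subset ?_).bddBelow
    rintro r ⟨a, ha, b, hb, -, rfl⟩
    simp only [coe_image, Set.mem_image]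
    exact ⟨(a, b), by simp [ha, hb], rfl⟩
  · exact ⟨α, hα, β, hβ, rfl, rfl⟩

lemma mul_coeff_attained {n : ℕ} (f g : TropPoly n) {γ : Fin n → ℕ}
    (hγ : γ ∈ (f.mul g).supp) :
    ∃ α ∈ f.supp, ∃ β ∈ g.supp, α + β = γ ∧
      (f.mul g).coeff γ = f.coeff α + g.coeff β := by
  have hne : {r | ∃ α ∈ f.supp, ∃ β ∈ g.supp, α + β = γ ∧
      r = f.coeff α + g.coeff β}.Nonempty := by
    obtain ⟨a, ha, b, hb, h⟩ := Finset.mem_add.1 (show γ ∈ f.supp + g.supp from hγ)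
    exact ⟨_, a, ha, b, hb, h, rfl⟩
  have hfin : {r | ∃ α ∈ f.supp, ∃ β ∈ g.supp, α + β = γ ∧
      r = f.coeff α + g.coeff β}.Finite := by
    refine (((f.supp ×ˢ g.supp).image
      (fun p => f.coeff p.1 + g.coeff p.2)).finite_toSet).subset ?_
    rintro r ⟨a, ha, b, hb, -, rfl⟩
    simp only [coe_image, Set.mem_image]
    exact ⟨(a, b), by simp [ha, hb], rfl⟩
  exact hne.csInf_mem hfin

lemma tropTerm_add {n : ℕ} (c d : ℝ) (α β : Fin n → ℕ) (x : Fin n → ℝ) :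
    tropTerm (c + d) (α + β) x = tropTerm c α x + tropTerm d β x := by
  simp only [tropTerm, Pi.add_apply, Nat.cast_add, add_mul, Finset.sum_add_distrib]
  ring

lemma tropTerm_mono {n : ℕ} {c d : ℝ} (h : c ≤ d) (α : Fin n → ℕ) (x : Fin n → ℝ) :
    tropTerm c α x ≤ tropTerm d α x := by
  simp only [tropTerm]; linarith

lemma mul_term_le {n : ℕ} (f g : TropPoly n) (x : Fin n → ℝ) {α β : Fin n → ℕ}
    (hα : α ∈ f.supp) (hβ : β ∈ g.supp) :
    tropTerm ((f.mul g).coeff (α + β)) (α + β) x ≤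
      tropTerm (f.coeff α) α x + tropTerm (g.coeff β) β x := by
  rw [← tropTerm_add]
  exact tropTerm_mono (mul_coeff_le f g hα hβ) _ _

lemma mul_term_attained {n : ℕ} (f g : TropPoly n) (x : Fin n → ℝ) {γ : Fin n → ℕ}
    (hγ : γ ∈ (f.mul g).supp) :
    ∃ α ∈ f.supp, ∃ β ∈ g.supp, α + β = γ ∧
      tropTerm ((f.mul g).coeff γ) γ x =
        tropTerm (f.coeff α) α x + tropTerm (g.coeff β) β x := by
  obtain ⟨α, hα, β, hβ, h, e⟩ := mul_coeff_attained f g hγ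
  refine ⟨α, hα, β, hβ, h, ?_⟩
  rw [e, ← tropTerm_add, h]

lemma mem_supp_mul {n : ℕ} (f g : TropPoly n) {α β : Fin n → ℕ}
    (hα : α ∈ f.supp) (hβ : β ∈ g.supp) : α + β ∈ (f.mul g).supp :=
  Finset.add_mem_add hα hβ

lemma mem_hyp_mul {n : ℕ} (f g : TropPoly n) (hf : f.supp.Nonempty) (hg : g.supp.Nonempty)
    (x : Fin n → ℝ) : x ∈ (f.mul g).hyp ↔ x ∈ f.hyp ∨ x ∈ g.hyp := by
  obtain ⟨α₀, hα₀, mf⟩ := f.supp.exists_min_image (fun α => tropTerm (f.coeff α) α x) hf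
  obtain ⟨β₀, hβ₀, mg⟩ := g.supp.exists_min_image (fun α => tropTerm (g.coeff α) α x) hg
  have key : ∀ γ ∈ (f.mul g).supp, tropTerm (f.coeff α₀) α₀ x + tropTerm (g.coeff β₀) β₀ x ≤
      tropTerm ((f.mul g).coeff γ) γ x := by
    intro γ hγ
    obtain ⟨α, hα, β, hβ, -, e⟩ := mul_term_attained f g x hγ
    rw [e]
    exact add_le_add (mf α hα) (mg β hβ)
  constructor
  · rintro ⟨γ₁, h₁, γ₂, h₂, hne, heq, hmin⟩
    by_contra hcon
    push Not at hcon
    obtain ⟨nf, ng⟩ := hcon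
    have h0 := (hmin _ (mem_supp_mul f g hα₀ hβ₀)).trans (mul_term_le f g x hα₀ hβ₀)
    have aux : ∀ γ ∈ (f.mul g).supp, tropTerm ((f.mul g).coeff γ) γ x ≤
        tropTerm (f.coeff α₀) α₀ x + tropTerm (g.coeff β₀) β₀ x → γ = α₀ + β₀ := by
      intro γ hγ hle
      obtain ⟨α, hα, β, hβ, rfl, e⟩ := mul_term_attained f g x hγ
      have h1 := mf α hα
      have h2 := mg β hβ
      have ea : α = α₀ := by
        by_contra hn
        exact nf ⟨α₀, hα₀, α, hα, fun h => hn h.symm, by linarith, mf⟩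
      have eb : β = β₀ := by
        by_contra hn
        exact ng ⟨β₀, hβ₀, β, hβ, fun h => hn h.symm, by linarith, mg⟩
      rw [ea, eb]
    exact hne ((aux _ h₁ h0).trans (aux _ h₂ (heq ▸ h0)).symm)
  · rintro (⟨α, hα, β, hβ, hne, heq, hmin⟩ | ⟨α, hα, β, hβ, hne, heq, hmin⟩)
    · have k1 := key _ (mem_supp_mul f g hα hβ₀)
      have k2 := key _ (mem_supp_mul f g hβ hβ₀)
      have l1 := mul_term_le f g x hα hβ₀
      have l2 := mul_term_le f g x hβ hβ₀
      have m := hmin _ hα₀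
      refine ⟨_, mem_supp_mul f g hα hβ₀, _, mem_supp_mul f g hβ hβ₀,
        fun h => hne (add_right_cancel h), by linarith, fun γ hγ => ?_⟩
      have := key γ hγ
      linarith
    · have k1 := key _ (mem_supp_mul f g hα₀ hα)
      have k2 := key _ (mem_supp_mul f g hα₀ hβ)
      have l1 := mul_term_le f g x hα₀ hα
      have l2 := mul_term_le f g x hα₀ hβ
      have m := hmin _ hβ₀
      refine ⟨_, mem_supp_mul f g hα₀ hα, _, mem_supp_mul f g hα₀ hβ,
        fun h => hne (add_left_cancel h), by linarith, fun γ hγ => ?_⟩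
      have := key γ hγ
      linarith

lemma mem_hyp_listProd {n : ℕ} (L : List (TropPoly n)) (hL : ∀ f ∈ L, f.supp.Nonempty)
    (x : Fin n → ℝ) : (TropPoly.listProd L).supp.Nonempty ∧
      (x ∈ (TropPoly.listProd L).hyp ↔ ∃ f ∈ L, x ∈ f.hyp) := by
  induction L with
  | nil =>
    refine ⟨⟨0, by simp [TropPoly.listProd, TropPoly.one]⟩, ?_⟩
    simp only [List.not_mem_nil, false_and, exists_false, iff_false]
    rintro ⟨α, hα, β, hβ, hne, -⟩
    simp only [TropPoly.listProd, TropPoly.one, List.foldr_nil, Finset.mem_singleton] at hα hβ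
    exact hne (hα.trans hβ.symm)
  | cons f L ih =>
    obtain ⟨h1, h2⟩ := ih fun g hg => hL g (List.mem_cons_of_mem _ hg)
    have hf := hL f List.mem_cons_self
    have e : TropPoly.listProd (f :: L) = f.mul (TropPoly.listProd L) := rfl
    rw [e]
    refine ⟨Finset.Nonempty.add hf h1, ?_⟩
    rw [mem_hyp_mul _ _ hf h1, h2]
    simp

lemma single_ne_zero' {n : ℕ} (i : Fin n) : single i 1 ≠ 0 := fun h => by
  simpa [single] using congrFun h i

lemma tropTerm_single {n : ℕ} (c : ℝ) (i : Fin n) (x : Fin n → ℝ) :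
    tropTerm c (single i 1) x = c + x i := by
  simp [tropTerm, single]

lemma tropTerm_zero' {n : ℕ} (c : ℝ) (x : Fin n → ℝ) : tropTerm c 0 x = c := by
  simp [tropTerm]

lemma mem_hyp_pos {n : ℕ} (i : Fin n) (x : Fin n → ℝ) :
    x ∈ (⟨{single i 1, 0}, fun α => if α = 0 then (1 : ℝ) else 0⟩ : TropPoly n).hyp ↔
      x i = 1 := by
  have hs := single_ne_zero' i
  constructor
  · rintro ⟨α, hα, β, hβ, hne, heq, -⟩
    simp only [Finset.mem_insert, Finset.mem_singleton] at hα hβ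
    rcases hα with rfl | rfl <;> rcases hβ with rfl | rfl
    · exact absurd rfl hne
    · simpa [hs, tropTerm_single, tropTerm_zero'] using heq
    · simpa [hs, tropTerm_single, tropTerm_zero'] using heq.symm
    · exact absurd rfl hne
  · intro h
    refine ⟨single i 1, by simp, 0, by simp, hs, ?_, ?_⟩
    · simp [hs, tropTerm_single, tropTerm_zero', h]
    · intro γ hγ
      simp only [Finset.mem_insert, Finset.mem_singleton] at hγ
      rcases hγ with rfl | rfl
      · exact le_rfl
      · simp [hs, tropTerm_single, tropTerm_zero', h]

lemma mem_hyp_neg {n l : ℕ} (e : Fin l → Fin n) (x : Fin n → ℝ)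
    (hx : ∀ j, x (e j) = 0 ∨ x (e j) = 1) :
    x ∈ (⟨(Finset.univ.image fun j : Fin l => single (e j) 1) ∪ {0},
      fun _ => (0 : ℝ)⟩ : TropPoly n).hyp ↔ ∃ j, x (e j) = 0 := by
  constructor
  · rintro ⟨α, hα, β, hβ, hne, heq, hmin⟩
    have h0 := hmin 0 (by simp)
    simp only [Finset.mem_union, Finset.mem_image, Finset.mem_univ, true_and,
      Finset.mem_singleton] at hα hβ
    have aux : ∀ j, 0 + x (e j) ≤ 0 → x (e j) = 0 := fun j h => by
      rcases hx j with h' | h' <;> linarith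
    rcases hα with ⟨j, rfl⟩ | rfl
    · refine ⟨j, aux j ?_⟩
      simpa only [tropTerm_single, tropTerm_zero'] using h0
    · rcases hβ with ⟨j, rfl⟩ | rfl
      · refine ⟨j, aux j ?_⟩
        simp only [tropTerm_single, tropTerm_zero'] at heq
        exact heq.symm.le
      · exact absurd rfl hne
  · rintro ⟨j, hj⟩
    refine ⟨0, by simp, single (e j) 1, by simp, (single_ne_zero' _).symm, ?_, ?_⟩
    · simp [tropTerm_single, tropTerm_zero', hj]
    · intro γ hγ
      simp only [Finset.mem_union, Finset.mem_image, Finset.mem_univ, true_and,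
        Finset.mem_singleton] at hγ
      rcases hγ with ⟨j, rfl⟩ | rfl
      · simp only [tropTerm_single, tropTerm_zero']
        rcases hx j with h' | h' <;> rw [h'] <;> norm_num
      · exact le_rfl

/-- The clause `y₁ ∨ ⋯ ∨ y_k ∨ ¬z₁ ∨ ⋯ ∨ ¬z_l` is satisfied by a Boolean
assignment `(a, b)` if and only if the corresponding 0/1-point lies on the
tropical hypersurface of
`(⊙_{i=1}^k (0·yᵢ ⊕ 1)) ⊙ (0·z₁ ⊕ ⋯ ⊕ 0·z_l ⊕ 0)`. -/
theorem clause_hypersurface (k l : ℕ) (hkl : 1 ≤ k + l)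
    (a : Fin k → Bool) (b : Fin l → Bool) :
    ((∃ i, a i = true) ∨ (∃ j, b j = false)) ↔
      (Fin.addCases (fun i => boolToReal (a i)) (fun j => boolToReal (b j)) :
          Fin (k + l) → ℝ) ∈
        (TropPoly.listProd
          ((List.ofFn fun i : Fin k =>
              (⟨{single (Fin.castAdd l i) 1, 0},
                fun α => if α = 0 then (1 : ℝ) else 0⟩ : TropPoly (k + l))) ++
            [(⟨(Finset.univ.image fun j : Fin l => single (Fin.natAdd k j) 1) ∪ {0},
                fun _ => (0 : ℝ)⟩ : TropPoly (k + l))])).hyp := by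
  rw [(mem_hyp_listProd _ ?_ _).2]
  · simp only [List.mem_append, List.mem_ofFn, List.mem_singleton, or_and_right, exists_or,
      exists_eq_left, Set.mem_range]
    rw [mem_hyp_neg (Fin.natAdd k) _ (fun j => by cases h : b j <;> simp [boolToReal, h])]
    refine or_congr ?_ ?_
    · constructor
      · rintro ⟨i, hi⟩
        exact ⟨_, ⟨i, rfl⟩, (mem_hyp_pos _ _).2 (by simp [boolToReal, hi])⟩
      · rintro ⟨f, ⟨i, rfl⟩, h⟩
        refine ⟨i, ?_⟩
        have := (mem_hyp_pos _ _).1 h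
        simpa [boolToReal] using this
    · simp [boolToReal]
  · intro f hf
    simp only [List.mem_append, List.mem_ofFn, List.mem_singleton, Set.mem_range] at hf
    rcases hf with ⟨i, rfl⟩ | rfl
    · exact ⟨0, by simp⟩
    · exact ⟨0, by simp⟩
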